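/- (Proposition 2, part (b)) Suppose f_A = sup_{a ∈ A} E^a(T_{B∪C}) and f_B = sup_{b ∈ B} E^b(T_{A∪C}) are finite, and ψ·σ < 1 where ψ = sup_{a ∈ A} ψ_a and σ = sup_{b ∈ B} σ_b. Then for every b ∈ B, E^b(T_{A∪C}) ≤ E^b(T_C) ≤ E^b(T_{A∪C}) + σ_b · (f_A + ψ f_B) / (1 − ψσ). -/

import Mathlib

open MeasureTheory ENNReal

/-- The first hitting time of the set `D` along the path `s`, valued in `ℕ∞`
(`⊤` if the path never visits `D`). -/
noncomputable def hitTime {Ω : Type*} (D : Set Ω) (s : ℕ → Ω) : ℕ∞ :=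
  ⨅ (k : ℕ) (_ : s k ∈ D), (k : ℕ∞)

/-- The path of the walk started at `x` with steps `ξ` : `S_n = x + ∑_{j<n} ξ j`. -/
def walk {Ω : Type*} [AddCommGroup Ω] (x : Ω) (ξ : ℕ → Ω) (n : ℕ) : Ω :=
  x + ∑ j ∈ Finset.range n, ξ j

/-- A random walk on a group `Ω`, described by the common law `ν` of its i.i.d.
steps together with the joint law `μ` of the step sequence (characterized on
cylinder sets as the product of `ν`'s). -/
structure RandomWalk (Ω : Type*) [AddCommGroup Ω] [MeasurableSpace Ω] where
  ν : Measure Ω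
  probν : IsProbabilityMeasure ν
  μ : Measure (ℕ → Ω)
  probμ : IsProbabilityMeasure μ
  iid : ∀ (n : ℕ) (f : Fin n → Ω),
    μ {ξ | ∀ i : Fin n, ξ (i : ℕ) = f i} = ∏ i : Fin n, ν {f i}

variable {Ω : Type*} [AddCommGroup Ω] [MeasurableSpace Ω]

/-- `P^x(θ)` : the probability that the path `(S_n)` of the walk started at `x`
has the property `θ`. -/
noncomputable def RandomWalk.P (W : RandomWalk Ω) (x : Ω) (θ : Set (ℕ → Ω)) : ℝ≥0∞ :=
  W.μ {ξ | walk x ξ ∈ θ}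

/-- `E^x(T_D)` : the expected hitting time of `D` for the walk started at `x`. -/
noncomputable def RandomWalk.E (W : RandomWalk Ω) (x : Ω) (D : Set Ω) : ℝ≥0∞ :=
  ∫⁻ ξ, (hitTime D (walk x ξ) : ℝ≥0∞) ∂W.μ

/-- The truncated Green's function `G_D(x,y) = ∑_{j≥0} P^x(S_j = y, j < T_{Dᶜ})`. -/
noncomputable def RandomWalk.G (W : RandomWalk Ω) (D : Set Ω) (x y : Ω) : ℝ≥0∞ :=
  ∑' j : ℕ, W.P x {s | s j = y ∧ (j : ℕ∞) < hitTime Dᶜ s}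

/-- The hitting distribution `H_D(x,y) = P^x(S_{T_D} = y)`. -/
noncomputable def RandomWalk.H (W : RandomWalk Ω) (D : Set Ω) (x y : Ω) : ℝ≥0∞ :=
  W.P x {s | ∃ k : ℕ, hitTime D s = (k : ℕ∞) ∧ s k = y}

/-! Splitting off the first step gives, by induction on `N`,
`E^x(min(T_C, N)) ≤ E^x(T_{A∪C}) + P^x(T_A < T_C) u` with `u = sup_{a ∈ A} E^a(min(T_C, N))`.
Taking suprema over `A` and over `B` yields `u ≤ f_A + ψ v` and `v ≤ f_B + σ u`, where `v` is the
analogue of `u` for `B`. Hence `u ≤ f_A + ψ f_B + ψσ u`, which can be solved for `u` because the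
truncation makes `u` finite; then let `N → ∞`. -/

theorem le_div_one_sub_of_le_add_mul {u c q : ℝ≥0∞} (hu : u ≠ ⊤) (hq : q < 1)
    (h : u ≤ c + q * u) : u ≤ c / (1 - q) := by
  rw [ENNReal.le_div_iff_mul_le (Or.inl (tsub_pos_of_lt hq).ne')
    (Or.inl (ENNReal.sub_ne_top ENNReal.one_ne_top)), ENNReal.mul_sub fun _ _ => hu, mul_one,
    mul_comm u]
  exact tsub_le_iff_right.2 h

section Sequences

variable {α : Type*}

/-- The sequence `y, ξ 0, ξ 1, …` obtained by prepending `y` to `ξ`. Conditioning on the first step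
of a walk amounts to writing its step sequence and its path in this form. -/
def consSeq (y : α) (ξ : ℕ → α) : ℕ → α
  | 0 => y
  | n + 1 => ξ n

theorem hitTime_anti {D D' : Set α} (h : D ⊆ D') (s : ℕ → α) : hitTime D' s ≤ hitTime D s :=
  le_iInf₂ fun k hk => iInf₂_le k (h hk)

theorem hitTime_eq_zero_iff {D : Set α} {s : ℕ → α} : hitTime D s = 0 ↔ s 0 ∈ D := by
  simp [hitTime]

theorem hitTime_lt_iff {D : Set α} {s : ℕ → α} {t : ℕ∞} :
    hitTime D s < t ↔ ∃ k : ℕ, s k ∈ D ∧ (k : ℕ∞) < t := by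
  simp [hitTime, iInf_lt_iff]

theorem hitTime_consSeq {D : Set α} {x : α} (hx : x ∉ D) (s : ℕ → α) :
    hitTime D (consSeq x s) = hitTime D s + 1 := by
  rw [hitTime, ← inf_iInf_nat_succ]
  simp [hitTime, consSeq, hx, ENat.iInf_add]

variable [MeasurableSpace α]

theorem measurable_consSeq : Measurable fun p : α × (ℕ → α) => consSeq p.1 p.2 :=
  measurable_pi_lambda _ fun
    | 0 => measurable_fst
    | n + 1 => (measurable_pi_apply n).comp measurable_snd

theorem measurableSet_hitTime_lt {D : Set α} (hD : MeasurableSet D) (t : ℕ∞) :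
    MeasurableSet {s | hitTime D s < t} := by
  simp only [hitTime_lt_iff, Set.ofPred_exists]
  exact .iUnion fun k => (measurable_pi_apply k hD).inter (.const _)

theorem measurable_hitTime {D : Set α} (hD : MeasurableSet D) :
    Measurable (hitTime D : (ℕ → α) → ℕ∞) := by
  refine ENat.measurable_iff.2 fun n => ?_
  have eq_diff : hitTime D ⁻¹' {(n : ℕ∞)} =
      {s | hitTime D s < (n + 1 : ℕ)} \ {s | hitTime D s < n} := by
    ext s
    simp only [Set.mem_preimage, Set.mem_singleton_iff, Set.mem_sdiff, Set.mem_ofPred_eq, not_lt,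
      Nat.cast_succ, ENat.lt_add_one_iff (ENat.natCast_ne_top n), le_antisymm_iff]
  rw [eq_diff]
  exact (measurableSet_hitTime_lt hD _).diff (measurableSet_hitTime_lt hD _)

theorem measurable_toENNReal_hitTime {D : Set α} (hD : MeasurableSet D) :
    Measurable fun s : ℕ → α => (hitTime D s : ℝ≥0∞) :=
  Measurable.of_discrete.comp (measurable_hitTime hD)

theorem measurableSet_hitTime_lt_hitTime {A C : Set α} (hA : MeasurableSet A)
    (hC : MeasurableSet C) : MeasurableSet {s : ℕ → α | hitTime A s < hitTime C s} :=
  ((measurable_hitTime hA).prodMk (measurable_hitTime hC)) (t := {p | p.1 < p.2}) .of_discrete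

variable [Countable α] [MeasurableSingletonClass α]

theorem ext_of_forall_cylinder {μ μ' : Measure (ℕ → α)} [IsFiniteMeasure μ]
    (h : ∀ (n : ℕ) (f : Fin n → α),
      μ {ξ | ∀ i : Fin n, ξ i = f i} = μ' {ξ | ∀ i : Fin n, ξ i = f i}) : μ = μ' := by
  have limit : IsProjectiveLimit μ' fun I => μ.map I.restrict := by
    refine (isProjectiveLimit_nat_iff
      (ProbabilityTheory.isProjectiveMeasureFamily_map_restrict
        fun t => (measurable_pi_apply t).aemeasurable) _).2
      fun n => Measure.ext_of_singleton fun f => ?_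
    have preimage_eq : Preorder.frestrictLe n ⁻¹' ({f} : Set (Finset.Iic n → α)) =
        {ξ : ℕ → α | ∀ i : Fin (n + 1), ξ i = f ⟨i, Finset.mem_Iic.2 i.is_le⟩} := by
      ext ξ
      simp [funext_iff, Fin.forall_iff]
    rw [Measure.map_apply (by fun_prop) (.singleton f),
      Measure.map_apply (by fun_prop) (.singleton f)]
    exact preimage_eq ▸ (h _ _).symm
  exact IsProjectiveLimit.unique (fun _ => rfl) limit

end Sequences

theorem walk_zero {G : Type*} [AddCommGroup G] (x : G) (ξ : ℕ → G) : walk x ξ 0 = x := by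
  simp [walk]

theorem walk_consSeq {G : Type*} [AddCommGroup G] (x y : G) (ξ : ℕ → G) :
    walk x (consSeq y ξ) = consSeq x (walk (x + y) ξ) := by
  funext n
  cases n with
  | zero => exact walk_zero x _
  | succ n =>
    simp only [walk, Finset.sum_range_succ', consSeq]
    abel

theorem measurable_walk [MeasurableAdd₂ Ω] (x : Ω) : Measurable (walk x : (ℕ → Ω) → ℕ → Ω) := by
  unfold walk
  fun_prop

namespace RandomWalk

variable (W : RandomWalk Ω)

instance : IsProbabilityMeasure W.ν := W.probν

instance : IsProbabilityMeasure W.μ := W.probμ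

/-- The truncated expected hitting time `E^x(min(T_D, N))`. Unlike `E^x(T_D)` it is finite, and it
determines `E^x(T_D)` as its supremum over `N`. -/
noncomputable def truncE (N : ℕ) (x : Ω) (D : Set Ω) : ℝ≥0∞ :=
  ∫⁻ ξ, min (hitTime D (walk x ξ) : ℝ≥0∞) N ∂W.μ

theorem truncE_le_natCast (N : ℕ) (x : Ω) (D : Set Ω) : W.truncE N x D ≤ N :=
  (lintegral_mono fun _ => min_le_right _ _).trans (by simp)

theorem truncE_le_E (N : ℕ) (x : Ω) (D : Set Ω) : W.truncE N x D ≤ W.E x D :=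
  lintegral_mono fun _ => min_le_left _ _

theorem truncE_mono (x : Ω) (D : Set Ω) : Monotone fun N => W.truncE N x D :=
  fun _ _ h => lintegral_mono fun _ => min_le_min_left _ (Nat.cast_le.2 h)

theorem truncE_of_mem (N : ℕ) {x : Ω} {D : Set Ω} (hx : x ∈ D) : W.truncE N x D = 0 := by
  simp [truncE, hitTime_eq_zero_iff.2 ((walk_zero x _).symm ▸ hx)]

theorem E_anti {D D' : Set Ω} (h : D ⊆ D') (x : Ω) : W.E x D' ≤ W.E x D :=
  lintegral_mono fun _ => ENat.toENNReal_le.2 (hitTime_anti h _)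

/-- The probability `P^x(T_A < T_C)`, written `ψ_x` for hitting `B` before `C` and `σ_x` for
hitting `A` before `C` in the paper. -/
noncomputable def hitProb (x : Ω) (A C : Set Ω) : ℝ≥0∞ :=
  W.P x {s | hitTime A s < hitTime C s}

theorem hitProb_of_mem {x : Ω} {A C : Set Ω} (hA : x ∈ A) (hC : x ∉ C) :
    W.hitProb x A C = 1 := by
  have sure : {ξ | hitTime A (walk x ξ) < hitTime C (walk x ξ)} = Set.univ :=
    Set.eq_univ_of_forall fun ξ => by
      have hA₀ : hitTime A (walk x ξ) = 0 := hitTime_eq_zero_iff.2 (by rwa [walk_zero])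
      have hC₀ : hitTime C (walk x ξ) ≠ 0 := hitTime_eq_zero_iff.not.2 (by rwa [walk_zero])
      exact hA₀.trans_lt (pos_iff_ne_zero.2 hC₀)
  exact (congrArg W.μ sure).trans measure_univ

variable [Countable Ω] [MeasurableSingletonClass Ω]

theorem map_consSeq_prod : (W.ν.prod W.μ).map (fun p => consSeq p.1 p.2) = W.μ := by
  refine ext_of_forall_cylinder fun n f => ?_
  rw [W.iid, Measure.map_apply measurable_consSeq (by measurability)]
  cases n with
  | zero => simp
  | succ n =>
    have preimage_eq : (fun p : Ω × (ℕ → Ω) => consSeq p.1 p.2) ⁻¹'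
        {ξ | ∀ i : Fin (n + 1), ξ i = f i} =
          {f 0} ×ˢ {ξ | ∀ i : Fin n, ξ i = f i.succ} := by
      ext ⟨y, ξ⟩
      simp [Fin.forall_fin_succ, consSeq]
    rw [preimage_eq, Measure.prod_prod, W.iid, Fin.prod_univ_succ]

theorem lintegral_walk_eq_lintegral_consSeq {F : (ℕ → Ω) → ℝ≥0∞} (hF : Measurable F) (x : Ω) :
    ∫⁻ ξ, F (walk x ξ) ∂W.μ = ∫⁻ y, ∫⁻ ξ, F (consSeq x (walk (x + y) ξ)) ∂W.μ ∂W.ν := by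
  have hFx : Measurable fun ξ => F (walk x ξ) := hF.comp (measurable_walk x)
  calc ∫⁻ ξ, F (walk x ξ) ∂W.μ
      = ∫⁻ p, F (walk x (consSeq p.1 p.2)) ∂W.ν.prod W.μ := by
        rw [← lintegral_map hFx measurable_consSeq, W.map_consSeq_prod]
    _ = ∫⁻ y, ∫⁻ ξ, F (walk x (consSeq y ξ)) ∂W.μ ∂W.ν :=
        lintegral_prod _ (hFx.comp measurable_consSeq).aemeasurable
    _ = ∫⁻ y, ∫⁻ ξ, F (consSeq x (walk (x + y) ξ)) ∂W.μ ∂W.ν := by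
        simp only [walk_consSeq]

theorem P_eq_lintegral_consSeq {θ : Set (ℕ → Ω)} (hθ : MeasurableSet θ) (x : Ω) :
    W.P x θ = ∫⁻ y, W.P (x + y) {s | consSeq x s ∈ θ} ∂W.ν := by
  have hcons : MeasurableSet {s | consSeq x s ∈ θ} :=
    measurable_consSeq.of_uncurry_left hθ
  have P_eq (z : Ω) {η : Set (ℕ → Ω)} (hη : MeasurableSet η) :
      W.P z η = ∫⁻ ξ, η.indicator 1 (walk z ξ) ∂W.μ :=
    (lintegral_indicator_one (measurable_walk z hη)).symm
  rw [P_eq x hθ, W.lintegral_walk_eq_lintegral_consSeq (measurable_one.indicator hθ)]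
  simp only [P_eq _ hcons]
  rfl

theorem hitProb_eq_lintegral {x : Ω} {A C : Set Ω} (hA : x ∉ A) (hC : x ∉ C) :
    W.hitProb x A C = ∫⁻ y, W.hitProb (x + y) A C ∂W.ν := by
  rw [hitProb,
    W.P_eq_lintegral_consSeq (measurableSet_hitTime_lt_hitTime .of_discrete .of_discrete)]
  simp only [Set.mem_ofPred_eq, hitTime_consSeq hA, hitTime_consSeq hC,
    ENat.add_lt_add_iff_right ENat.one_ne_top, hitProb]

theorem truncE_succ (N : ℕ) {x : Ω} {D : Set Ω} (hx : x ∉ D) :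
    W.truncE (N + 1) x D = 1 + ∫⁻ y, W.truncE N (x + y) D ∂W.ν := by
  have trunc_cons (s : ℕ → Ω) : min (hitTime D (consSeq x s) : ℝ≥0∞) (N + 1 : ℕ) =
      1 + min (hitTime D s : ℝ≥0∞) N := by
    rw [hitTime_consSeq hx, ENat.toENNReal_add, ENat.toENNReal_one, Nat.cast_succ,
      min_add_add_right, add_comm]
  rw [truncE, W.lintegral_walk_eq_lintegral_consSeq
    ((measurable_toENNReal_hitTime .of_discrete).min measurable_const)]
  simp only [trunc_cons, lintegral_add_left measurable_const, lintegral_const, measure_univ,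
    mul_one, truncE]

theorem E_eq_iSup_truncE (x : Ω) (D : Set Ω) : W.E x D = ⨆ N, W.truncE N x D := by
  have measurable_trunc (N : ℕ) : Measurable fun ξ => min (hitTime D (walk x ξ) : ℝ≥0∞) N :=
    ((measurable_toENNReal_hitTime .of_discrete).comp (measurable_walk x)).min measurable_const
  simp only [truncE]
  rw [← lintegral_iSup measurable_trunc fun _ _ h _ => min_le_min_left _ (Nat.cast_le.2 h)]
  simp only [← inf_iSup_eq, ENNReal.iSup_natCast, inf_top_eq, E]

theorem truncE_le_truncE_union_add (A C : Set Ω) (N : ℕ) (x : Ω) :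
    W.truncE N x C ≤ W.truncE N x (A ∪ C) + W.hitProb x A C * ⨆ a : A, W.truncE N a C := by
  induction N generalizing x with
  | zero => simp [truncE]
  | succ N ih =>
    by_cases hC : x ∈ C
    · simp [W.truncE_of_mem _ hC]
    by_cases hA : x ∈ A
    · rw [W.hitProb_of_mem hA hC, one_mul]
      exact le_add_left (le_iSup (fun a : A => W.truncE (N + 1) a C) ⟨x, hA⟩)
    set u := ⨆ a : A, W.truncE (N + 1) a C
    have hu : ⨆ a : A, W.truncE N a C ≤ u := iSup_mono fun a => W.truncE_mono a C N.le_succ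
    calc W.truncE (N + 1) x C
        = 1 + ∫⁻ y, W.truncE N (x + y) C ∂W.ν := W.truncE_succ N hC
      _ ≤ 1 + ∫⁻ y, (W.truncE N (x + y) (A ∪ C) + W.hitProb (x + y) A C * u) ∂W.ν := by
          gcongr with y
          exact (ih (x + y)).trans (by gcongr)
      _ = 1 + ∫⁻ y, W.truncE N (x + y) (A ∪ C) ∂W.ν
            + (∫⁻ y, W.hitProb (x + y) A C ∂W.ν) * u := by
          rw [lintegral_add_left .of_discrete, lintegral_mul_const _ .of_discrete, add_assoc]
      _ = W.truncE (N + 1) x (A ∪ C) + W.hitProb x A C * u := by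
          rw [W.truncE_succ N (by simp [hA, hC]), W.hitProb_eq_lintegral hA hC]

theorem truncE_le_E_union_add (A C : Set Ω) (N : ℕ) (x : Ω) :
    W.truncE N x C ≤ W.E x (A ∪ C) + W.hitProb x A C * ⨆ a : A, W.truncE N a C :=
  (W.truncE_le_truncE_union_add A C N x).trans (by gcongr; exact W.truncE_le_E N x _)

theorem iSup_truncE_le (A B C : Set Ω) (N : ℕ) :
    ⨆ a : A, W.truncE N a C ≤ (⨆ a : A, W.E a (B ∪ C)) +
      (⨆ a : A, W.hitProb a B C) * ⨆ b : B, W.truncE N b C :=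
  iSup_le fun a => (W.truncE_le_E_union_add B C N a).trans <| by
    gcongr
    · exact le_iSup (fun a : A => W.E a (B ∪ C)) a
    · exact le_iSup (fun a : A => W.hitProb a B C) a

end RandomWalk

theorem prop2b_general
    {Ω : Type*} [AddCommGroup Ω] [Countable Ω] [MeasurableSpace Ω]
    [MeasurableSingletonClass Ω] (W : RandomWalk Ω) (A B C : Set Ω)
    (fA fB ψ σ : ℝ≥0∞)
    (hfA : fA = ⨆ a : A, W.E a (B ∪ C)) (hfB : fB = ⨆ b : B, W.E b (A ∪ C))
    (hψ : ψ = ⨆ a : A, W.hitProb a B C) (hσ : σ = ⨆ b : B, W.hitProb b A C)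
    (hψσ : ψ * σ < 1) (x : Ω) :
    W.E x (A ∪ C) ≤ W.E x C ∧
      W.E x C ≤ W.E x (A ∪ C) + W.hitProb x A C * (fA + ψ * fB) / (1 - ψ * σ) := by
  refine ⟨W.E_anti Set.subset_union_right x, ?_⟩
  rw [W.E_eq_iSup_truncE x C]
  refine iSup_le fun N => ?_
  set u := ⨆ a : A, W.truncE N a C
  set v := ⨆ b : B, W.truncE N b C
  have u_ne_top : u ≠ ⊤ :=
    ne_top_of_le_ne_top (ENNReal.natCast_ne_top N) (iSup_le fun a => W.truncE_le_natCast N a C)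
  have hu : u ≤ fA + ψ * v := hfA ▸ hψ ▸ W.iSup_truncE_le A B C N
  have hv : v ≤ fB + σ * u := hfB ▸ hσ ▸ W.iSup_truncE_le B A C N
  have u_le : u ≤ (fA + ψ * fB) / (1 - ψ * σ) := by
    refine le_div_one_sub_of_le_add_mul u_ne_top hψσ ?_
    calc u ≤ fA + ψ * (fB + σ * u) := hu.trans (by gcongr)
      _ = fA + ψ * fB + ψ * σ * u := by ring
  rw [mul_div_assoc]
  exact (W.truncE_le_E_union_add A C N x).trans (by gcongr)

/-- Proposition 2, part (b): if `f_A, f_B` are finite and `ψσ < 1`, then for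
every `b ∈ B`,
`E^b(T_{A∪C}) ≤ E^b(T_C) ≤ E^b(T_{A∪C}) + σ_b (f_A + ψ f_B)/(1 - ψσ)`. -/
theorem prop2b
    {Ω : Type*} [AddCommGroup Ω] [Countable Ω] [MeasurableSpace Ω]
    [MeasurableSingletonClass Ω] (W : RandomWalk Ω) (A B C : Set Ω)
    (hcover : A ∪ B ∪ C = Set.univ) (hAB : Disjoint A B) (hAC : Disjoint A C)
    (hBC : Disjoint B C)
    (ψ' σ' : Ω → ℝ≥0∞)
    (hψdef : ∀ x, ψ' x = W.P x {s | hitTime B s < hitTime C s})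
    (hσdef : ∀ x, σ' x = W.P x {s | hitTime A s < hitTime C s})
    (fA fB ψ σ : ℝ≥0∞)
    (hfAdef : fA = ⨆ a : A, W.E a (B ∪ C)) (hfA : fA ≠ ⊤)
    (hfBdef : fB = ⨆ b : B, W.E b (A ∪ C)) (hfB : fB ≠ ⊤)
    (hψ : ψ = ⨆ a : A, ψ' a) (hσ : σ = ⨆ b : B, σ' b)
    (hψσ : ψ * σ < 1) :
    ∀ b ∈ B, W.E b (A ∪ C) ≤ W.E b C ∧
      W.E b C ≤ W.E b (A ∪ C) + σ' b * (fA + ψ * fB) / (1 - ψ * σ) := by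
  obtain rfl : ψ' = fun x => W.hitProb x B C := funext hψdef
  obtain rfl : σ' = fun x => W.hitProb x A C := funext hσdef
  exact fun b _ => prop2b_general W A B C fA fB ψ σ hfAdef hfBdef hψ hσ hψσ b
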